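/- Let n and ℓ be integers with n/2 < ℓ ≤ ⌈(2n−2)/3⌉. Every zero-free sequence of length ℓ in Z/nZ contains a term of multiplicity at least ⌈(3ℓ − n + 1)/3⌉ (equivalently, at least (3ℓ−n+1)/3 rounded up). -/

import Mathlib

/-- A list in an additive commutative group is zero-free if no nonempty
sublist sums to zero. -/
def ZeroFree {G : Type*} [AddCommGroup G] (l : List G) : Prop :=
  ∀ t : List G, t.Sublist l → t ≠ [] → t.sum ≠ 0

/-- The sumset of a list: all sums of nonempty sublists. -/
def sumset {G : Type*} [AddCommGroup G] (l : List G) : Set G :=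
  {x | ∃ t : List G, t.Sublist l ∧ t ≠ [] ∧ t.sum = x}

section Aux

variable {G : Type*} [AddCommGroup G] [DecidableEq G]

/-- All subset sums (including the empty one) of a multiset. -/
def XS (s : Multiset G) : Finset G := (s.powerset.map Multiset.sum).toFinset

/-- Zero-freeness for multisets. -/
def ZFm (s : Multiset G) : Prop := ∀ t ≤ s, t ≠ 0 → t.sum ≠ 0

theorem mem_XS {s : Multiset G} {x : G} : x ∈ XS s ↔ ∃ t ≤ s, t.sum = x := by
  simp [XS]

theorem zero_mem_XS (s : Multiset G) : (0 : G) ∈ XS s := mem_XS.2 ⟨0, by simp, by simp⟩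

theorem XS_cons (b : G) (s : Multiset G) : XS (b ::ₘ s) = XS s ∪ (XS s).image (b + ·) := by
  ext x
  simp only [XS, Multiset.powerset_cons, Multiset.map_add, Multiset.toFinset_add, Finset.mem_union,
    Multiset.mem_toFinset, Finset.mem_image, Multiset.mem_map]
  constructor
  · rintro (h | ⟨_, ⟨t, ht, rfl⟩, rfl⟩)
    · exact Or.inl h
    · exact Or.inr ⟨t.sum, ⟨t, ht, rfl⟩, by simp⟩
  · rintro (h | ⟨_, ⟨t, ht, rfl⟩, rfl⟩)
    · exact Or.inl h
    · exact Or.inr ⟨b ::ₘ t, ⟨t, ht, rfl⟩, by simp⟩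

theorem ZFm.of_cons {b : G} {s : Multiset G} (h : ZFm (b ::ₘ s)) : ZFm s :=
  fun t ht => h t (ht.trans (Multiset.le_cons_self s b))

theorem ZFm.add_ne {b : G} {s : Multiset G} (h : ZFm (b ::ₘ s)) {x : G} (hx : x ∈ XS s) :
    b + x ≠ 0 := by
  obtain ⟨t, ht, rfl⟩ := mem_XS.1 hx
  have := h (b ::ₘ t) ((Multiset.cons_le_cons_iff b).2 ht) (by simp)
  simpa using this

theorem sum_notMem {b : G} {s : Multiset G} (h : ZFm (b ::ₘ s)) : b + s.sum ∉ XS s := by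
  intro hx
  obtain ⟨t, ht, hts⟩ := mem_XS.1 hx
  obtain ⟨u, rfl⟩ := Multiset.le_iff_exists_add.1 ht
  refine h.add_ne (mem_XS.2 ⟨u, Multiset.le_add_left u t, rfl⟩) ?_
  rw [Multiset.sum_add] at hts
  have : t.sum + (b + u.sum) = t.sum + 0 := by rw [add_zero]; nth_rewrite 2 [hts]; abel
  exact add_left_cancel this

theorem sum_mem_XS (s : Multiset G) : s.sum ∈ XS s := mem_XS.2 ⟨s, le_rfl, rfl⟩

theorem XS_card_lt {b : G} {s : Multiset G} (h : ZFm (b ::ₘ s)) :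
    (XS s).card < (XS (b ::ₘ s)).card := by
  apply Finset.card_lt_card
  refine (Finset.ssubset_iff_of_subset ?_).2 ⟨b + s.sum, ?_, sum_notMem h⟩
  · rw [XS_cons]; exact Finset.subset_union_left
  · simpa using sum_mem_XS (b ::ₘ s)

theorem card_le_XS (s : Multiset G) (h : ZFm s) : s.card + 1 ≤ (XS s).card := by
  induction s using Multiset.induction_on with
  | empty => exact Finset.card_pos.2 ⟨0, zero_mem_XS 0⟩
  | cons b s ih =>
    have := ih h.of_cons
    have := XS_card_lt h
    simp; omega

/-- If the growth is one then the structure is rigid. -/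
theorem growth_one {b : G} {s : Multiset G} (h : ZFm (b ::ₘ s))
    (hc : (XS (b ::ₘ s)).card ≤ (XS s).card + 1) :
    XS s = (XS (b ::ₘ s)).erase (b ::ₘ s).sum ∧
      (XS s).image (b + ·) = (XS (b ::ₘ s)).erase 0 := by
  constructor
  · apply Finset.eq_of_subset_of_card_le
    · intro x hx
      refine Finset.mem_erase.2 ⟨?_, by rw [XS_cons]; exact Finset.mem_union_left _ hx⟩
      rintro rfl
      exact sum_notMem h (by simpa using hx)
    · rw [Finset.card_erase_of_mem (sum_mem_XS _)]; omega
  · apply Finset.eq_of_subset_of_card_le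
    · intro x hx
      refine Finset.mem_erase.2 ⟨?_, by rw [XS_cons]; exact Finset.mem_union_right _ hx⟩
      obtain ⟨y, hy, rfl⟩ := Finset.mem_image.1 hx
      exact h.add_ne hy
    · rw [Finset.card_erase_of_mem (zero_mem_XS _),
        Finset.card_image_of_injective _ (add_right_injective b)]; omega

theorem all_equal {s : Multiset G} (h : ZFm s)
    (hg : ∀ b ∈ s, (XS s).card ≤ (XS (s.erase b)).card + 1) :
    ∀ b ∈ s, ∀ c ∈ s, b = c := by
  have key : ∀ b ∈ s, ((XS s).erase s.sum).image (b + ·) = (XS s).erase 0 := by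
    intro b hb
    have e := Multiset.cons_erase hb
    have := growth_one (b := b) (s := s.erase b) (by rwa [e]) (by rw [e]; exact hg b hb)
    rw [e] at this
    rw [← this.1, this.2]
  intro b hb c hc
  by_contra hne
  have hs0 : s.sum ≠ 0 := h s le_rfl (by rintro rfl; simp at hb)
  have kb := key b hb
  have kc := key c hc
  -- stability under d = b - c
  have h0 : (0 : G) ∈ (XS s).erase s.sum := Finset.mem_erase.2 ⟨hs0.symm, zero_mem_XS s⟩
  have h1 : b ∈ (XS s).erase 0 := by
    rw [← kb]; exact Finset.mem_image.2 ⟨0, h0, by simp⟩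
  rw [← kc] at h1
  obtain ⟨y, hy, hyb⟩ := Finset.mem_image.1 h1
  have hy0 : y ≠ 0 := by
    rintro rfl
    exact hne (by simpa using hyb.symm)
  have h2 : y ∈ (XS s).erase 0 := Finset.mem_erase.2 ⟨hy0, (Finset.mem_erase.1 hy).2⟩
  rw [← kb] at h2
  obtain ⟨z, hz, hzy⟩ := Finset.mem_image.1 h2
  have h3 : c + z ∈ (XS s).erase 0 := by
    rw [← kc]; exact Finset.mem_image.2 ⟨z, hz, rfl⟩
  have : c + z = 0 := by
    have e1 : c + (b + z) = b := by rw [hzy, hyb]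
    have : b + (c + z) = b + 0 := by rw [add_zero]; nth_rewrite 2 [← e1]; abel
    exact add_left_cancel this
  exact (Finset.mem_erase.1 h3).1 this

/-- Smooth multisets. -/
def SmoothM (s : Multiset G) : Prop :=
  ∃ (g : G) (m : Multiset ℕ), (∀ x ∈ m, 1 ≤ x) ∧ m.map (· • g) = s ∧
    (∀ x, x ∈ XS s ↔ ∃ j ≤ m.sum, j • g = x) ∧ ∀ j, 1 ≤ j → j ≤ m.sum → j • g ≠ 0

theorem smooth_replicate (k : ℕ) (g : G) (h : ZFm (Multiset.replicate k g)) :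
    SmoothM (Multiset.replicate k g) := by
  refine ⟨g, Multiset.replicate k 1, ?_, by simp, ?_, ?_⟩
  · intro x hx; rw [Multiset.eq_of_mem_replicate hx]
  · intro x
    rw [mem_XS]
    simp only [Multiset.sum_replicate, smul_eq_mul, mul_one]
    constructor
    · rintro ⟨t, ht, rfl⟩
      obtain ⟨j, hj, rfl⟩ := Multiset.le_replicate_iff.1 ht
      exact ⟨j, hj, by simp⟩
    · rintro ⟨j, hj, rfl⟩
      exact ⟨Multiset.replicate j g, Multiset.replicate_le_replicate g |>.2 hj, by simp⟩
  · intro j h1 h2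
    simp only [Multiset.sum_replicate, smul_eq_mul, mul_one] at h2
    have := h (Multiset.replicate j g) (Multiset.replicate_le_replicate g |>.2 h2)
      (by intro h; have := congrArg Multiset.card h; simp at this; omega)
    simpa using this

theorem smooth_cons {b : G} {s : Multiset G} (h : ZFm (b ::ₘ s)) (hs : SmoothM s)
    (hc : (XS (b ::ₘ s)).card < 2 * (s.card + 1)) : SmoothM (b ::ₘ s) := by
  obtain ⟨g, m, hm, hmap, hX, hnz⟩ := hs
  have hnd : ¬ Disjoint (XS s) ((XS s).image (b + ·)) := by
    intro hd
    rw [XS_cons, Finset.card_union_of_disjoint hd,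
      Finset.card_image_of_injective _ (add_right_injective b)] at hc
    have := card_le_XS s h.of_cons
    omega
  obtain ⟨x, hx1, hx2⟩ := Finset.not_disjoint_iff.1 hnd
  obtain ⟨z, hz, hzx⟩ := Finset.mem_image.1 hx2
  obtain ⟨j, hj, rfl⟩ := (hX x).1 hx1
  obtain ⟨i, hi, rfl⟩ := (hX z).1 hz
  have hij : i < j := by
    by_contra hle
    push Not at hle
    refine h.add_ne ((hX ((i - j) • g)).2 ⟨i - j, by omega, rfl⟩) ?_
    have e : i • g = j • g + (i - j) • g := by rw [← add_nsmul]; congr 1; omega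
    have : j • g + (b + (i - j) • g) = j • g + 0 := by
      rw [add_zero]; nth_rewrite 2 [← hzx]; rw [e]; abel
    exact add_left_cancel this
  obtain ⟨y, rfl⟩ := Nat.exists_eq_add_of_lt hij
  have hb : b = (y + 1) • g := by
    have : b + i • g = (y + 1) • g + i • g := by
      rw [hzx, ← add_nsmul]; congr 1; omega
    exact add_right_cancel this
  refine ⟨g, (y + 1) ::ₘ m, ?_, ?_, ?_, ?_⟩
  · intro x hx
    rcases Multiset.mem_cons.1 hx with rfl | hx
    · omega
    · exact hm x hx
  · rw [Multiset.map_cons, hmap, hb]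
  · intro x
    rw [XS_cons, Finset.mem_union, Finset.mem_image, hX, Multiset.sum_cons]
    constructor
    · rintro (⟨k, hk, rfl⟩ | ⟨z, hz, rfl⟩)
      · exact ⟨k, by omega, rfl⟩
      · obtain ⟨k, hk, rfl⟩ := (hX z).1 hz
        exact ⟨y + 1 + k, by omega, by rw [hb, ← add_nsmul]⟩
    · rintro ⟨k, hk, rfl⟩
      by_cases hkm : k ≤ m.sum
      · exact Or.inl ⟨k, hkm, rfl⟩
      · refine Or.inr ⟨(k - (y + 1)) • g, (hX _).2 ⟨_, by omega, rfl⟩, ?_⟩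
        rw [hb, ← add_nsmul]; congr 1; omega
  · intro k h1 h2
    rw [Multiset.sum_cons] at h2
    by_cases hkm : k ≤ m.sum
    · exact hnz k h1 hkm
    · have := h.add_ne ((hX ((k - (y + 1)) • g)).2 ⟨_, by omega, rfl⟩)
      rw [hb, ← add_nsmul] at this
      rwa [show y + 1 + (k - (y + 1)) = k by omega] at this

theorem smooth_main (k : ℕ) : ∀ s : Multiset G, s.card = k → ZFm s →
    (XS s).card + 1 ≤ 2 * s.card → SmoothM s := by
  induction k with
  | zero =>
    intro s hs _ hc
    omega
  | succ k ih =>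
    intro s hs h hc
    by_cases hg : ∀ b ∈ s, (XS s).card ≤ (XS (s.erase b)).card + 1
    · have he := all_equal h hg
      obtain ⟨g, hgs⟩ := Multiset.card_pos_iff_exists_mem.1 (by omega : 0 < s.card)
      have : s = Multiset.replicate (k + 1) g :=
        Multiset.eq_replicate.2 ⟨hs, fun b hb => he b hb g hgs⟩
      rw [this] at h ⊢
      exact smooth_replicate _ _ h
    · push Not at hg
      obtain ⟨b, hb, hlt⟩ := hg
      obtain ⟨t, rfl⟩ := Multiset.exists_cons_of_mem hb
      rw [Multiset.erase_cons_head] at hlt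
      rw [Multiset.card_cons] at hs hc
      exact smooth_cons h (ih t (by omega) h.of_cons (by omega)) (by omega)

end Aux

theorem weight_bound (m : Multiset ℕ) (hm : ∀ x ∈ m, 1 ≤ x) :
    3 * m.card ≤ m.sum + 2 * m.count 1 + m.count 2 := by
  induction m using Multiset.induction_on with
  | empty => simp
  | cons a m ih =>
    have h1 := ih (fun x hx => hm x (Multiset.mem_cons_of_mem hx))
    have h2 := hm a (Multiset.mem_cons_self a m)
    simp only [Multiset.card_cons, Multiset.sum_cons, Multiset.count_cons]
    split_ifs <;> omega

theorem stmt15 (n ℓ : ℕ) (h1 : n < 2 * ℓ) (h2 : ℓ ≤ (2 * n - 2 + 2) / 3)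
    (α : List (ZMod n)) (hlen : α.length = ℓ) (hzf : ZeroFree α) :
    ∃ a ∈ α, (3 * ℓ - n + 1 + 2) / 3 ≤ α.count a := by
  have hn : n ≠ 0 := by rintro rfl; omega
  have : NeZero n := ⟨hn⟩
  have hz : ZFm (α : Multiset (ZMod n)) := by
    intro t ht ht0
    induction t using Quotient.inductionOn with
    | _ l =>
      obtain ⟨l', hp, hs⟩ := (Multiset.coe_le.1 ht : l.Subperm α)
      have := hzf l' hs (by rintro rfl; exact ht0 (by simpa using hp))
      rw [hp.sum_eq] at this
      simpa using this
  have hcard : (XS (α : Multiset (ZMod n))).card ≤ n := by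
    have := Finset.card_le_univ (XS (α : Multiset (ZMod n)))
    rwa [ZMod.card] at this
  obtain ⟨g, m, hm, hmap, -, hnz⟩ := smooth_main ℓ (α : Multiset (ZMod n)) (by simpa using hlen) hz
    (by simp [hlen]; omega)
  have hsum : m.sum < n := by
    by_contra hle
    exact hnz n (by omega) (by omega) (by simp)
  have hw := weight_bound m hm
  have hmc : m.card = ℓ := by
    have := congrArg Multiset.card hmap
    simpa [hlen] using this
  have hcnt : ∀ k : ℕ, m.count k ≤ α.count (k • g) := by
    intro k
    have : m.count k ≤ (m.map (· • g)).count (k • g) := Multiset.le_count_iff_replicate_le.2 (by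
      have := Multiset.map_le_map (f := (· • g)) (Multiset.le_count_iff_replicate_le.1 (le_refl (m.count k)))
      simpa only [Multiset.map_replicate] using this)
    rwa [hmap, Multiset.coe_count] at this
  have c1 := hcnt 1
  have c2 := hcnt 2
  by_cases hb : (3 * ℓ - n + 1 + 2) / 3 ≤ α.count (1 • g)
  · exact ⟨_, List.count_pos_iff.1 (by omega), hb⟩
  · have hb2 : (3 * ℓ - n + 1 + 2) / 3 ≤ α.count (2 • g) := by omega
    exact ⟨_, List.count_pos_iff.1 (by omega), hb2⟩
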